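/- Let A be a commutative ring that is a finitely generated ℝ-algebra, let G be a finite group acting on A by ℝ-algebra automorphisms, and let B := A^G be the fixed subalgebra. Let m be a maximal ideal of A whose stabilizer is trivial, i.e., g·m ≠ m for every g ∈ G with g ≠ e, and set p := m ∩ B. If the localization A_m is a regular local ring, then the localization B_p is a regular local ring. (This is the algebraic form of: the image under the geometric quotient map of a nonsingular point with trivial stabilizer is a nonsingular point of the quotient variety.) -/

import Mathlib

/-!
Write `B = A^G`. By the Chinese remainder theorem some `e : A` is `1` to second order at `m` and
vanishes to second order at the other points of the orbit of `m` (`exists_localizer`). The trace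
`tr (e * a) = ∑ g, g • (e * a)` is then an invariant congruent to `a` modulo `m ^ 2`.

Let `a₁, …, aₙ` generate `m A_m`, with `n = dim A_m`, and put `tᵢ = tr (e * aᵢ)`, an element of `p`.
By Nakayama's lemma the `tᵢ` generate `m A_m` as well. They even generate `p B_p`: for `b ∈ p` there
is a relation `s * b = ∑ cᵢ * tᵢ` with `s ∉ m`, and multiplying it by `e` and taking traces gives
`tr (e * s) * b = ∑ tr (e * cᵢ) * tᵢ` in `B`, where `tr (e * s) ∉ p` because `e * s` has trace
congruent to `s` modulo `m` (`span_invTrace_eq_maximalIdeal`).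

So `p B_p` has at most `n` generators. As `A` is integral over `B`, contraction of primes is
strictly monotone, whence `n = dim A_m ≤ dim B_p`. Since `B` is Noetherian by the Artin–Tate lemma,
Krull's height theorem bounds `dim B_p` by the number of generators, and all these numbers agree.
-/

/-- The subalgebra of `G`-fixed elements of a commutative `ℝ`-algebra on which a group `G`
acts by `ℝ`-algebra automorphisms. -/
def fixedSubalgebra (G A : Type*) [Group G] [CommRing A] [Algebra ℝ A]
    [MulSemiringAction G A] [SMulCommClass G ℝ A] : Subalgebra ℝ A where
  carrier := {a | ∀ g : G, g • a = a}
  mul_mem' := fun {a b} ha hb g => by rw [smul_mul', ha g, hb g]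
  add_mem' := fun {a b} ha hb g => by rw [smul_add, ha g, hb g]
  algebraMap_mem' := fun r g => by
    rw [Algebra.algebraMap_eq_smul_one, smul_comm, smul_one]

/-- A commutative ring is a regular local ring if it is a Noetherian local ring whose
maximal ideal can be generated by (Krull-dimension)-many elements. -/
def IsRegularLocal (R : Type*) [CommRing R] : Prop :=
  ∃ h : IsLocalRing R, IsNoetherianRing R ∧
    ∃ s : Finset R, Ideal.span (s : Set R) = @IsLocalRing.maximalIdeal R _ h ∧
      (s.card : WithBot (WithTop ℕ)) = ringKrullDim R

/-- A function that is `1` to second order at `m` and vanishes to second order at all other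
points of the orbit of `m`. It exists by the Chinese remainder theorem because these points are
distinct from `m`. -/
lemma exists_localizer {G A : Type*} [Group G] [Finite G] [CommRing A] [MulSemiringAction G A]
    (m : Ideal A) [hm : m.IsMaximal]
    (hfree : ∀ g : G, g ≠ 1 → (fun a => g • a) '' (m : Set A) ≠ (m : Set A)) :
    ∃ e : A, e - 1 ∈ m ^ 2 ∧ ∀ g : G, g ≠ 1 → g • e ∈ m ^ 2 := by
  classical
  have := Fintype.ofFinite G
  let c : G → Ideal A := fun g => m.comap (MulSemiringAction.toRingHom G A g)
  have hmem (g : G) (a : A) : a ∈ c g ↔ g • a ∈ m := Iff.rfl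
  have hmax (g : G) : (c g).IsMaximal :=
    Ideal.comap_isMaximal_of_surjective _ (MulAction.surjective g)
  have hne (g : G) (hg : g ≠ 1) : m ≠ c g := by
    intro h
    refine hfree g hg (Set.ext fun a => ⟨?_, fun ha => ⟨g⁻¹ • a, ?_, smul_inv_smul g a⟩⟩)
    · rintro ⟨b, hb, rfl⟩
      have hb' : b ∈ m := hb
      rw [h] at hb'
      exact hb'
    · change g⁻¹ • a ∈ m
      rw [h, hmem, smul_inv_smul]
      exact ha
  have key : m ^ 2 ⊔ ⨅ g ∈ Finset.univ.filter (fun g : G => g ≠ 1), (c g) ^ 2 = ⊤ := by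
    refine Ideal.sup_iInf_eq_top fun g hg => ?_
    have : IsCoprime m (c g) :=
      Ideal.isCoprime_iff_sup_eq.mpr (hm.coprime_of_ne (hmax g) (hne g (Finset.mem_filter.mp hg).2))
    exact Ideal.isCoprime_iff_sup_eq.mp this.pow
  obtain ⟨u, hu, e, he, hue⟩ := Submodule.mem_sup.mp (key ▸ Submodule.mem_top : (1 : A) ∈ _)
  refine ⟨e, ?_, fun g hg => ?_⟩
  · rw [← hue, sub_add_cancel_right]
    exact neg_mem hu
  · have h1 : e ∈ (c g) ^ 2 := by
      simp only [Submodule.mem_iInf] at he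
      exact he g (by simpa using hg)
    exact Ideal.le_comap_pow (MulSemiringAction.toRingHom G A g) 2 h1

/-- The trace `∑ g, g • a` of `a`, as an element of the algebra of invariants. -/
def invTrace {G A : Type*} [Group G] [Fintype G] [CommRing A] [Algebra ℝ A]
    [MulSemiringAction G A] [SMulCommClass G ℝ A] (a : A) : fixedSubalgebra G A :=
  ⟨∑ g : G, g • a, fun h => by
    simp only [Finset.smul_sum, smul_smul]
    exact Equiv.sum_comp (Equiv.mulLeft h) fun g => g • a⟩

section

variable {G A : Type*} [Group G] [Fintype G] [CommRing A] [Algebra ℝ A]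
    [MulSemiringAction G A] [SMulCommClass G ℝ A]

lemma coe_invTrace (a : A) : ((invTrace a : fixedSubalgebra G A) : A) = ∑ g : G, g • a := rfl

lemma invTrace_mul_coe (a : A) (b : fixedSubalgebra G A) :
    (invTrace (a * b) : fixedSubalgebra G A) = invTrace a * b := by
  apply Subtype.ext
  rw [MulMemClass.coe_mul, coe_invTrace, coe_invTrace, Finset.sum_mul]
  refine Finset.sum_congr rfl fun g _ => ?_
  rw [smul_mul', b.2 g]

lemma invTrace_sum {ι : Type*} (s : Finset ι) (f : ι → A) :
    (invTrace (∑ i ∈ s, f i) : fixedSubalgebra G A) = ∑ i ∈ s, invTrace (f i) := by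
  apply Subtype.ext
  rw [AddSubmonoidClass.coe_finsetSum, coe_invTrace]
  simp only [coe_invTrace, Finset.smul_sum]
  exact Finset.sum_comm

/-- Every element of `A` agrees to second order at `m` with an invariant. -/
lemma invTrace_localizer_sub_mem {m : Ideal A} {e : A} (he : e - 1 ∈ m ^ 2)
    (he' : ∀ g : G, g ≠ 1 → g • e ∈ m ^ 2) (a : A) :
    ((invTrace (e * a) : fixedSubalgebra G A) : A) - a ∈ m ^ 2 := by
  classical
  have h : ((invTrace (e * a) : fixedSubalgebra G A) : A) - a
      = (e - 1) * a + ∑ g ∈ Finset.univ.erase (1 : G), (g • e) * (g • a) := by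
    rw [coe_invTrace, ← Finset.add_sum_erase _ _ (Finset.mem_univ (1 : G))]
    simp only [smul_mul', one_smul]
    ring
  rw [h]
  refine add_mem (Ideal.mul_mem_right _ _ he) (sum_mem fun g hg => ?_)
  exact Ideal.mul_mem_right _ _ (he' g (Finset.ne_of_mem_erase hg))

lemma isIntegral_fixedSubalgebra : Algebra.IsIntegral (fixedSubalgebra G A) A := by
  have : SMulCommClass G (fixedSubalgebra G A) A := ⟨fun g b a => by
    rw [Algebra.smul_def, Algebra.smul_def, smul_mul']
    congr 1
    exact b.2 g⟩
  have : Algebra.IsInvariant (fixedSubalgebra G A) A G := ⟨fun b hb => ⟨⟨b, hb⟩, rfl⟩⟩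
  exact Algebra.IsInvariant.isIntegral (fixedSubalgebra G A) A G

lemma isNoetherianRing_fixedSubalgebra (hfg : Algebra.FiniteType ℝ A) :
    IsNoetherianRing (fixedSubalgebra G A) := by
  have := isIntegral_fixedSubalgebra (G := G) (A := A)
  have : Algebra.FiniteType (fixedSubalgebra G A) A :=
    Algebra.FiniteType.of_restrictScalars_finiteType ℝ _ A
  have : Module.Finite (fixedSubalgebra G A) A := Algebra.IsIntegral.finite
  have : Algebra.FiniteType ℝ (fixedSubalgebra G A) :=
    ⟨fg_of_fg_of_fg ℝ (fixedSubalgebra G A) A hfg.1 Module.Finite.fg_top Subtype.val_injective⟩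
  exact Algebra.FiniteType.isNoetherianRing ℝ _

end

/-- Along an integral extension, contraction of primes is strictly monotone, so it does not
decrease heights. -/
lemma height_le_height_comap_of_isIntegral {R S : Type*} [CommRing R] [CommRing S] [Algebra R S]
    [Algebra.IsIntegral R S] (q : Ideal S) [hq : q.IsPrime] :
    q.height ≤ (q.comap (algebraMap R S)).height := by
  have hmono : StrictMono (PrimeSpectrum.comap (algebraMap R S)) := fun I J hIJ =>
    Ideal.IsIntegral.comap_lt_comap (R := R) (I := I.asIdeal) (J := J.asIdeal) hIJ
  have := Order.height_le_height_apply_of_strictMono _ hmono ⟨q, hq⟩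
  rwa [← PrimeSpectrum.height_eq_orderHeight, ← PrimeSpectrum.height_eq_orderHeight] at this

/-- Invariants approximating generators of `m A_m` to second order generate `p B_p`. That they
generate `m A_m` is Nakayama's lemma; multiplying a relation over `A` by the localizer `e` and
taking traces brings it down to `B`. -/
lemma span_invTrace_eq_maximalIdeal {G A : Type*} [Group G] [Fintype G] [CommRing A]
    [Algebra ℝ A] [MulSemiringAction G A] [SMulCommClass G ℝ A]
    (m : Ideal A) [hm : m.IsMaximal] (p : Ideal (fixedSubalgebra G A)) [hpp : p.IsPrime]
    (hp : p = Ideal.comap (fixedSubalgebra G A).val m) [IsNoetherianRing A]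
    {e : A} (he : e - 1 ∈ m ^ 2) (he' : ∀ g : G, g ≠ 1 → g • e ∈ m ^ 2)
    {ι : Type*} [Fintype ι] (a : ι → A)
    (ha : Ideal.span (Set.range fun i => algebraMap A (Localization.AtPrime m) (a i))
      = IsLocalRing.maximalIdeal (Localization.AtPrime m)) :
    Ideal.span (Set.range fun i => algebraMap (fixedSubalgebra G A) (Localization.AtPrime p)
        (invTrace (e * a i))) = IsLocalRing.maximalIdeal (Localization.AtPrime p) := by
  classical
  let t : ι → fixedSubalgebra G A := fun i => invTrace (e * a i)
  have ham (i : ι) : a i ∈ m := by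
    rw [← IsLocalization.AtPrime.to_map_mem_maximal_iff (Localization.AtPrime m) m, ← ha]
    exact Ideal.subset_span ⟨i, rfl⟩
  have hta (x : A) : ((invTrace (e * x) : fixedSubalgebra G A) : A) - x ∈ m ^ 2 :=
    invTrace_localizer_sub_mem he he' x
  have htm (x : A) : (invTrace (e * x) : fixedSubalgebra G A) ∈ p ↔ x ∈ m := by
    rw [hp]
    change ((invTrace (e * x) : fixedSubalgebra G A) : A) ∈ m ↔ _
    have h1 := Ideal.pow_le_self two_ne_zero (hta x)
    exact ⟨fun h => by simpa using sub_mem h h1, fun h => by simpa using add_mem h1 h⟩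
  have hgen : Ideal.map (algebraMap A (Localization.AtPrime m)) m ≤
      Ideal.map (algebraMap A (Localization.AtPrime m))
        (Ideal.span (Set.range fun i => (t i : A))) := by
    have hmm : Ideal.map (algebraMap A (Localization.AtPrime m)) m =
      IsLocalRing.maximalIdeal (Localization.AtPrime m) :=
      Localization.AtPrime.map_eq_maximalIdeal
    refine Submodule.le_of_le_smul_of_le_jacobson_bot
      (I := IsLocalRing.maximalIdeal (Localization.AtPrime m)) (IsNoetherian.noetherian _)
      (IsLocalRing.maximalIdeal_le_jacobson _) ?_
    rw [hmm, ← ha, Ideal.span_le]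
    rintro _ ⟨i, rfl⟩
    have h2 : a i = t i - (t i - a i) := by ring
    dsimp only
    rw [ha, h2, map_sub]
    refine sub_mem (Submodule.mem_sup_left ?_) (Submodule.mem_sup_right ?_)
    · exact Ideal.mem_map_of_mem _ (Ideal.subset_span ⟨i, rfl⟩)
    · rw [← hmm, smul_eq_mul, ← pow_two, ← Ideal.map_pow]
      exact Ideal.mem_map_of_mem _ (hta _)
  apply le_antisymm
  · rw [Ideal.span_le]
    rintro _ ⟨i, rfl⟩
    exact (IsLocalization.AtPrime.to_map_mem_maximal_iff (Localization.AtPrime p) p _).mpr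
      ((htm _).mpr (ham i))
  · rw [← Localization.AtPrime.map_eq_maximalIdeal, Ideal.map_le_iff_le_comap]
    intro b hb
    have hbm : (b : A) ∈ m := by rw [hp] at hb; exact hb
    obtain ⟨s, hs, hsb⟩ := (IsLocalization.algebraMap_mem_map_algebraMap_iff m.primeCompl
      (Localization.AtPrime m) _ _).mp (hgen (Ideal.mem_map_of_mem _ hbm))
    obtain ⟨c, hc⟩ := (Ideal.mem_span_range_iff_exists_fun).mp hsb
    -- the trace of `e * s` is an invariant denominator
    have hσ : (invTrace (e * s) : fixedSubalgebra G A) ∈ p.primeCompl := fun h => hs ((htm s).mp h)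
    have hrel : (invTrace (e * s) : fixedSubalgebra G A) * b
        = ∑ i, invTrace (e * c i) * t i := by
      rw [← invTrace_mul_coe, mul_assoc, ← hc, Finset.mul_sum, invTrace_sum]
      refine Finset.sum_congr rfl fun i _ => ?_
      rw [← mul_assoc, invTrace_mul_coe]
    have : Set.range (fun i => algebraMap (fixedSubalgebra G A) (Localization.AtPrime p)
        (invTrace (e * a i))) = algebraMap _ _ '' Set.range t := by
      rw [← Set.range_comp]; rfl
    rw [Ideal.mem_comap, this, ← Ideal.map_span,
      IsLocalization.algebraMap_mem_map_algebraMap_iff p.primeCompl]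
    refine ⟨_, hσ, ?_⟩
    rw [hrel]
    exact sum_mem fun i _ => Ideal.mul_mem_left _ _ (Ideal.subset_span ⟨i, rfl⟩)

/-- Let `A` be a finitely generated commutative `ℝ`-algebra with an action of a finite
group `G` by `ℝ`-algebra automorphisms, `B = A^G` the fixed subalgebra, `m` a maximal
ideal of `A` with trivial stabilizer (`g • m ≠ m` for `g ≠ e`), and `p = m ∩ B`. If the
localization `A_m` is regular local, then so is `B_p`. -/
theorem stmt13 {G A : Type*} [Group G] [Finite G] [CommRing A] [Algebra ℝ A]
    [MulSemiringAction G A] [SMulCommClass G ℝ A]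
    (hfg : Algebra.FiniteType ℝ A)
    (m : Ideal A) [hm : m.IsMaximal]
    (hfree : ∀ g : G, g ≠ 1 → (fun a => g • a) '' (m : Set A) ≠ (m : Set A))
    (p : Ideal ↥(fixedSubalgebra G A))
    (hp : p = Ideal.comap (fixedSubalgebra G A).val m)
    (hpp : p.IsPrime)
    (hreg : IsRegularLocal (Localization.AtPrime m)) :
    IsRegularLocal (@Localization.AtPrime ↥(fixedSubalgebra G A) _ p hpp) := by
  classical
  have := Fintype.ofFinite G
  obtain ⟨h, -, s, hs, hcard⟩ := hreg
  have hA : IsNoetherianRing A := Algebra.FiniteType.isNoetherianRing ℝ A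
  have hB := isNoetherianRing_fixedSubalgebra (G := G) hfg
  have := isIntegral_fixedSubalgebra (G := G) (A := A)
  obtain ⟨e, he, he'⟩ := exists_localizer m hfree
  -- clear the denominators of the generators
  have hnum (x : s) : ∃ a : A, Associated (algebraMap A (Localization.AtPrime m) a) x := by
    obtain ⟨⟨a, u⟩, hu⟩ := IsLocalization.surj m.primeCompl (x : Localization.AtPrime m)
    exact ⟨a, Associated.symm ⟨(IsLocalization.map_units _ u).unit, hu⟩⟩
  choose a ha using hnum
  have hspan : Ideal.span (Set.range fun i => algebraMap A (Localization.AtPrime m) (a i))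
      = IsLocalRing.maximalIdeal (Localization.AtPrime m) := by
    rw [← hs]
    apply le_antisymm <;> rw [Ideal.span_le]
    · rintro _ ⟨i, rfl⟩
      exact Ideal.mem_of_dvd _ (ha i).symm.dvd (Ideal.subset_span i.2)
    · intro x hx
      exact Ideal.mem_of_dvd _ (ha ⟨x, hx⟩).dvd (Ideal.subset_span ⟨⟨x, hx⟩, rfl⟩)
  have hmax := span_invTrace_eq_maximalIdeal m p hp he he' a hspan
  have hT : Ideal.span ((Finset.univ.image fun i => algebraMap (fixedSubalgebra G A)
      (Localization.AtPrime p) (invTrace (e * a i)) : Finset (Localization.AtPrime p)) :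
      Set (Localization.AtPrime p)) = IsLocalRing.maximalIdeal (Localization.AtPrime p) := by
    rw [← hmax, Finset.coe_image, Finset.coe_univ, Set.image_univ]
  have hBp : IsNoetherianRing (Localization.AtPrime p) :=
    IsLocalization.isNoetherianRing p.primeCompl _ hB
  refine ⟨inferInstance, hBp, _, hT, le_antisymm ?_ ?_⟩
  · refine le_trans ?_ (le_trans hcard.le ?_)
    · exact_mod_cast Finset.card_image_le.trans (by simp)
    · rw [IsLocalization.AtPrime.ringKrullDim_eq_height m,
        IsLocalization.AtPrime.ringKrullDim_eq_height p, hp]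
      exact WithBot.coe_le_coe.mpr
        (height_le_height_comap_of_isIntegral (R := fixedSubalgebra G A) m)
  · rw [← IsLocalRing.maximalIdeal_height_eq_ringKrullDim]
    have := Ideal.height_le_card_of_mem_minimalPrimes_span_finset
      (p := IsLocalRing.maximalIdeal (Localization.AtPrime p)) (s := Finset.univ.image fun i =>
        algebraMap (fixedSubalgebra G A) (Localization.AtPrime p) (invTrace (e * a i)))
      (by rw [hT, Ideal.minimalPrimes_eq_subsingleton_self]; rfl)
    exact WithBot.coe_le_coe.mpr this
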